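/- Let (A_i)_{i∈ℕ}, (B_i)_{i∈ℕ}, (Θ_i)_{i∈ℕ} be mutually independent sequences of random variables such that the A_i are i.i.d. nonnegative real with E[A_i] = a₁ and E[A_i²] = 1, the B_i are i.i.d. nonnegative real with E[B_i] = a₂ and E[B_i²] = 1, and the Θ_i are i.i.d. real-valued (taking values in [−π, π)) with trigonometric moments φ_p = E[exp(i p Θ)] satisfying φ₁ ∈ ℝ and φ₂ ∈ ℝ. Set a = √(a₁ a₂) and H_n = (1/n) Σ_{i=1}^n A_i B_i exp(i Θ_i). Then the ℝ²-valued random vectors √n · (Re(H_n) − a² φ₁, Im(H_n)) converge in distribution (weak convergence of the pushforward laws) to the centered bivariate Gaussian measure with diagonal covariance matrix diag(½(1 + φ₂ − 2 φ₁² a⁴), ½(1 − φ₂)). -/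

import Mathlib

open MeasureTheory ProbabilityTheory Complex Filter Topology

namespace LRS

variable {Ω : Type*} [MeasurableSpace Ω] {μ : Measure Ω} [IsProbabilityMeasure μ]

/-- Grouping: a family independent over pairs gives independent blocks. -/
lemma iIndepFun_curry_blocks {X : ℕ → Fin 3 → Ω → ℝ} (mX : ∀ i j, Measurable (X i j))
    (h : iIndepFun (fun (p : (_ : ℕ) × Fin 3) ω => X p.1 p.2 ω) μ) :
    iIndepFun (fun i ω => (X i · ω)) μ := by
  have i1 : ∀ i j, IsProbabilityMeasure (μ.map (X i j)) :=
    fun i j => Measure.isProbabilityMeasure_map (mX i j).aemeasurable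
  have h2 : ∀ i, iIndepFun (X i) μ := fun i =>
    h.precomp (g := fun j : Fin 3 => (⟨i, j⟩ : (_ : ℕ) × Fin 3))
      (fun a b hab => by simpa using hab)
  have e : (MeasurableEquiv.piCurry (fun (_ : ℕ) (_ : Fin 3) => ℝ)) ∘ (fun ω p => X p.1 p.2 ω)
      = fun ω i j => X i j ω := by
    ext; simp [Sigma.curry]
  rw [iIndepFun_iff_map_fun_eq_infinitePi_map (by fun_prop), ← e,
    ← Measure.map_map (by fun_prop) (by fun_prop),
    (iIndepFun_iff_map_fun_eq_infinitePi_map (by fun_prop)).1 h,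
    Measure.infinitePi_map_piCurry (fun i j => μ.map (X i j))]
  congrm Measure.infinitePi fun i => ?_
  rw [(iIndepFun_iff_map_fun_eq_infinitePi_map (by fun_prop)).1 (h2 i)]

lemma integral_three {a b θ : Ω → ℝ} (ha : Measurable a) (hb : Measurable b) (hθ : Measurable θ)
    (h1 : IndepFun a b μ) (h2 : IndepFun (fun ω => (a ω, b ω)) θ μ)
    {f g h : ℝ → ℝ} (hf : Measurable f) (hg : Measurable g) (hh : Measurable h) :
    ∫ ω, f (a ω) * g (b ω) * h (θ ω) ∂μ
      = (∫ ω, f (a ω) ∂μ) * (∫ ω, g (b ω) ∂μ) * ∫ ω, h (θ ω) ∂μ := by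
  have e1 := h2.integral_fun_comp_mul_comp (f := fun p : ℝ × ℝ => f p.1 * g p.2) (g := h)
    (ha.prodMk hb).aemeasurable hθ.aemeasurable
    (Measurable.aestronglyMeasurable (by fun_prop)) hh.aestronglyMeasurable
  have e2 := h1.integral_fun_comp_mul_comp (f := f) (g := g)
    ha.aemeasurable hb.aemeasurable hf.aestronglyMeasurable hg.aestronglyMeasurable
  rw [← e2]
  exact e1

lemma trig_moments {θ : Ω → ℝ} (hθ : Measurable θ) {φ₁ φ₂ : ℝ}
    (hφ₁ : (φ₁ : ℂ) = ∫ ω, Complex.exp (Complex.I * (θ ω : ℂ)) ∂μ)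
    (hφ₂ : (φ₂ : ℂ) = ∫ ω, Complex.exp (2 * Complex.I * (θ ω : ℂ)) ∂μ) (s u : ℝ) :
    ∫ ω, (s * Real.cos (θ ω) + u * Real.sin (θ ω)) ∂μ = s * φ₁ ∧
    ∫ ω, (s * Real.cos (θ ω) + u * Real.sin (θ ω)) ^ 2 ∂μ
      = s ^ 2 * ((1 + φ₂) / 2) + u ^ 2 * ((1 - φ₂) / 2) := by
  have ic : ∀ c : ℝ, Integrable (fun ω => Real.cos (c * θ ω)) μ := fun c =>
    Integrable.of_bound (Measurable.aestronglyMeasurable (by fun_prop)) 1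
      (.of_forall fun ω => Real.abs_cos_le_one _)
  have is : ∀ c : ℝ, Integrable (fun ω => Real.sin (c * θ ω)) μ := fun c =>
    Integrable.of_bound (Measurable.aestronglyMeasurable (by fun_prop)) 1
      (.of_forall fun ω => Real.abs_sin_le_one _)
  have key : ∀ c : ℝ, ∫ ω, Complex.exp ((c : ℂ) * Complex.I * (θ ω : ℂ)) ∂μ
      = ((∫ ω, Real.cos (c * θ ω) ∂μ : ℝ) : ℂ) + ((∫ ω, Real.sin (c * θ ω) ∂μ : ℝ) : ℂ) * I := by
    intro c
    rw [← integral_complex_ofReal, ← integral_complex_ofReal, ← integral_mul_const,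
      ← integral_add (f := fun ω => ((Real.cos (c * θ ω) : ℝ) : ℂ))
        (g := fun ω => ((Real.sin (c * θ ω) : ℝ) : ℂ) * I)
        (ic c).ofReal ((is c).ofReal.mul_const I)]
    congr 1 with ω
    rw [show (c : ℂ) * I * (θ ω : ℂ) = ((c * θ ω : ℝ) : ℂ) * I by push_cast; ring,
      Complex.exp_mul_I]
    push_cast
    rfl
  have k1 := key 1
  have k2 := key 2
  simp only [ofReal_one, one_mul] at k1
  simp only [ofReal_ofNat] at k2
  rw [← hφ₁] at k1
  rw [← hφ₂] at k2
  have r1 := congrArg Complex.re k1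
  have m1 := congrArg Complex.im k1
  have r2 := congrArg Complex.re k2
  have m2 := congrArg Complex.im k2
  simp at r1 m1 r2 m2
  have ic1 := ic 1
  have is1 := is 1
  simp only [one_mul] at ic1 is1
  constructor
  · rw [integral_add (ic1.const_mul s) (is1.const_mul u), integral_const_mul, integral_const_mul,
      ← r1, ← m1]
    ring
  · have e : ∀ ω, (s * Real.cos (θ ω) + u * Real.sin (θ ω)) ^ 2
        = (s ^ 2 + u ^ 2) / 2 + (s ^ 2 - u ^ 2) / 2 * Real.cos (2 * θ ω)
          + s * u * Real.sin (2 * θ ω) := by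
      intro ω
      rw [Real.cos_two_mul, Real.sin_two_mul]
      have := Real.sin_sq_add_cos_sq (θ ω)
      linear_combination u ^ 2 * this
    simp_rw [e]
    rw [integral_add (f := fun ω => (s ^ 2 + u ^ 2) / 2 + (s ^ 2 - u ^ 2) / 2 * Real.cos (2 * θ ω))
        (((integrable_const _).add ((ic 2).const_mul _))) ((is 2).const_mul _),
      integral_add (integrable_const _) ((ic 2).const_mul _), integral_const_mul,
      integral_const_mul, ← r2, ← m2]
    simp
    ring

end LRS

/-- Central limit theorem for the composite LRS channel coefficient:
`√n (Re H_n - a² φ₁, Im H_n)` converges in distribution (weak convergence of the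
pushforward laws) to the centered bivariate Gaussian with diagonal covariance
`diag(½(1 + φ₂ - 2 φ₁² a⁴), ½(1 - φ₂))`. -/
theorem lrs_channel_clt
    {Ω : Type*} [MeasurableSpace Ω] {μ : Measure Ω} [IsProbabilityMeasure μ]
    (A B Θ : ℕ → Ω → ℝ) (a₁ a₂ a φ₁ φ₂ : ℝ)
    (hIndep : ProbabilityTheory.iIndepFun
      (Sum.elim A (Sum.elim B Θ) : ℕ ⊕ (ℕ ⊕ ℕ) → Ω → ℝ) μ)
    (hAmeas : ∀ i, Measurable (A i)) (hBmeas : ∀ i, Measurable (B i))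
    (hΘmeas : ∀ i, Measurable (Θ i))
    (hAiid : ∀ i, IdentDistrib (A i) (A 0) μ μ)
    (hBiid : ∀ i, IdentDistrib (B i) (B 0) μ μ)
    (hΘiid : ∀ i, IdentDistrib (Θ i) (Θ 0) μ μ)
    (hApos : ∀ i ω, 0 ≤ A i ω) (hBpos : ∀ i ω, 0 ≤ B i ω)
    (hΘrange : ∀ i ω, Θ i ω ∈ Set.Ico (-Real.pi) Real.pi)
    (hAint : Integrable (A 0) μ) (hBint : Integrable (B 0) μ)
    (hA2int : Integrable (fun ω => A 0 ω ^ 2) μ)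
    (hB2int : Integrable (fun ω => B 0 ω ^ 2) μ)
    (hA1 : ∫ ω, A 0 ω ∂μ = a₁) (hB1 : ∫ ω, B 0 ω ∂μ = a₂)
    (hA2 : ∫ ω, A 0 ω ^ 2 ∂μ = 1) (hB2 : ∫ ω, B 0 ω ^ 2 ∂μ = 1)
    (ha : a = Real.sqrt (a₁ * a₂))
    (hφ₁ : (φ₁ : ℂ) = ∫ ω, Complex.exp (Complex.I * (Θ 0 ω : ℂ)) ∂μ)
    (hφ₂ : (φ₂ : ℂ) = ∫ ω, Complex.exp (2 * Complex.I * (Θ 0 ω : ℂ)) ∂μ)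
    (H : ℕ → Ω → ℂ)
    (hH : H = fun (n : ℕ) (ω : Ω) => (n : ℂ)⁻¹ *
      ∑ i ∈ Finset.range n, (A i ω : ℂ) * (B i ω : ℂ) * Complex.exp (Complex.I * (Θ i ω : ℂ)))
    (X : ℕ → Ω → ℝ × ℝ)
    (hX : X = fun (n : ℕ) (ω : Ω) =>
      (Real.sqrt (n : ℝ) * ((H n ω).re - a ^ 2 * φ₁), Real.sqrt (n : ℝ) * (H n ω).im))
    (G : Measure (ℝ × ℝ))
    (hG : G = (gaussianReal 0 (((1 + φ₂ - 2 * φ₁ ^ 2 * a ^ 4) / 2).toNNReal)).prod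
      (gaussianReal 0 (((1 - φ₂) / 2).toNNReal))) :
    ∀ f : BoundedContinuousFunction (ℝ × ℝ) ℝ,
      Tendsto (fun n => ∫ x, f x ∂(μ.map (X n))) atTop (𝓝 (∫ x, f x ∂G)) := by
  have hA0 := hAmeas 0
  have hB0 := hBmeas 0
  have hΘ0 := hΘmeas 0
  have mS : ∀ x, Measurable ((Sum.elim A (Sum.elim B Θ) : ℕ ⊕ (ℕ ⊕ ℕ) → Ω → ℝ) x) := by
    rintro (i | i | i)
    exacts [hAmeas i, hBmeas i, hΘmeas i]
  have hAB : ∀ i, IndepFun (A i) (B i) μ := fun i =>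
    hIndep.indepFun (i := Sum.inl i) (j := Sum.inr (Sum.inl i)) (by simp)
  have hABΘ : ∀ i, IndepFun (fun ω => (A i ω, B i ω)) (Θ i) μ := fun i =>
    hIndep.indepFun_prodMk mS (Sum.inl i) (Sum.inr (Sum.inl i)) (Sum.inr (Sum.inr i))
      (by simp) (by simp)
  have hblocks : iIndepFun (fun i ω => ((![A i, B i, Θ i] : Fin 3 → Ω → ℝ) · ω)) μ := by
    refine LRS.iIndepFun_curry_blocks (X := fun i => ![A i, B i, Θ i]) ?_ ?_
    · intro i j
      fin_cases j
      exacts [hAmeas i, hBmeas i, hΘmeas i]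
    · have := hIndep.precomp (g := fun p : (_ : ℕ) × Fin 3 =>
        (![Sum.inl p.1, Sum.inr (Sum.inl p.1), Sum.inr (Sum.inr p.1)] p.2 : ℕ ⊕ (ℕ ⊕ ℕ))) (by
          rintro ⟨i, j⟩ ⟨k, l⟩ h
          fin_cases j <;> fin_cases l <;> simp_all)
      convert! this using 1
      funext p
      obtain ⟨i, j⟩ := p
      fin_cases j <;> rfl
  have ha4 : a ^ 2 = a₁ * a₂ := by
    rw [ha, Real.sq_sqrt]
    exact mul_nonneg (hA1 ▸ integral_nonneg (hApos 0)) (hB1 ▸ integral_nonneg (hBpos 0))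
  -- one-dimensional projections
  let Y : ℝ → ℝ → ℕ → Ω → ℝ := fun s u i ω =>
    A i ω * B i ω * (s * Real.cos (Θ i ω) + u * Real.sin (Θ i ω))
  have mY : ∀ s u i, Measurable (Y s u i) := by
    intro s u i
    have := hAmeas i
    have := hBmeas i
    have := hΘmeas i
    fun_prop
  have Yindep : ∀ s u, iIndepFun (Y s u) μ := fun s u =>
    hblocks.comp (fun _ (x : Fin 3 → ℝ) => x 0 * x 1 * (s * Real.cos (x 2) + u * Real.sin (x 2)))
      (fun _ => by fun_prop)
  have Yident : ∀ s u i, IdentDistrib (Y s u i) (Y s u 0) μ μ := fun s u i =>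
    (((hAiid i).prodMk (hBiid i) (hAB i) (hAB 0)).prodMk (hΘiid i) (hABΘ i) (hABΘ 0)).comp
      (u := fun x : (ℝ × ℝ) × ℝ => x.1.1 * x.1.2 * (s * Real.cos x.2 + u * Real.sin x.2))
      (by fun_prop)
  have Ymean : ∀ s u, ∫ ω, Y s u 0 ω ∂μ = a ^ 2 * (s * φ₁) := by
    intro s u
    have := LRS.integral_three hA0 hB0 hΘ0 (hAB 0) (hABΘ 0) (f := fun x => x) (g := fun x => x)
      (h := fun x => s * Real.cos x + u * Real.sin x) (by fun_prop) (by fun_prop) (by fun_prop)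
    rw [ha4, ← (LRS.trig_moments hΘ0 hφ₁ hφ₂ s u).1, ← hA1, ← hB1, ← this]
  have Ysq : ∀ s u, ∫ ω, Y s u 0 ω ^ 2 ∂μ
      = s ^ 2 * ((1 + φ₂) / 2) + u ^ 2 * ((1 - φ₂) / 2) := by
    intro s u
    have := LRS.integral_three hA0 hB0 hΘ0 (hAB 0) (hABΘ 0) (f := fun x => x ^ 2)
      (g := fun x => x ^ 2)
      (h := fun x => (s * Real.cos x + u * Real.sin x) ^ 2) (by fun_prop) (by fun_prop)
      (by fun_prop)
    rw [hA2, hB2, (LRS.trig_moments hΘ0 hφ₁ hφ₂ s u).2] at this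
    simp only [Y, mul_pow]
    rw [this]
    ring
  have YL2 : ∀ s u, MemLp (Y s u 0) 2 μ := by
    intro s u
    rw [memLp_two_iff_integrable_sq (mY s u 0).aestronglyMeasurable]
    have i1 : Integrable (fun ω => A 0 ω ^ 2 * B 0 ω ^ 2) μ :=
      ((hAB 0).comp (φ := fun x => x ^ 2) (ψ := fun x => x ^ 2) (by fun_prop)
        (by fun_prop)).integrable_mul hA2int hB2int
    have := i1.mul_bdd (c := (|s| + |u|) ^ 2)
      (g := fun ω => (s * Real.cos (Θ 0 ω) + u * Real.sin (Θ 0 ω)) ^ 2)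
      (Measurable.aestronglyMeasurable (by fun_prop)) (.of_forall fun ω => by
        rw [norm_pow]
        refine pow_le_pow_left₀ (norm_nonneg _) ?_ 2
        refine (norm_add_le _ _).trans ?_
        simp only [norm_mul, Real.norm_eq_abs]
        have h1 := mul_le_mul_of_nonneg_left (Real.abs_cos_le_one (Θ 0 ω)) (abs_nonneg s)
        have h2 := mul_le_mul_of_nonneg_left (Real.abs_sin_le_one (Θ 0 ω)) (abs_nonneg u)
        linarith)
    refine this.congr (.of_forall fun ω => ?_)
    simp only [Y]
    ring
  have Yvar : ∀ s u, Var[Y s u 0; μ] = s ^ 2 * ((1 + φ₂ - 2 * φ₁ ^ 2 * a ^ 4) / 2)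
      + u ^ 2 * ((1 - φ₂) / 2) := by
    intro s u
    rw [variance_eq_sub (YL2 s u)]
    have := Ysq s u
    simp only [Pi.pow_apply]
    rw [this, Ymean]
    ring
  have v1 : 0 ≤ (1 + φ₂ - 2 * φ₁ ^ 2 * a ^ 4) / 2 := by
    have := variance_nonneg (Y 1 0 0) μ
    rw [Yvar] at this
    linarith
  have v2 : 0 ≤ (1 - φ₂) / 2 := by
    have := variance_nonneg (Y 0 1 0) μ
    rw [Yvar] at this
    linarith
  have clt : ∀ s u, Tendsto (fun n : ℕ => charFun (μ.map (fun ω => (Real.sqrt n)⁻¹ *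
      (∑ k ∈ Finset.range n, Y s u k ω - n * ∫ ω, Y s u 0 ω ∂μ))) 1) atTop
      (𝓝 (charFun (gaussianReal 0 Var[Y s u 0; μ].toNNReal) 1)) := by
    intro s u
    have h := (tendstoInDistribution_inv_sqrt_mul_sum_sub
      (HasLaw.id (μ := gaussianReal 0 Var[Y s u 0; μ].toNNReal))
      (YL2 s u) (Yindep s u) (Yident s u)).tendsto
    have := ProbabilityMeasure.tendsto_iff_tendsto_charFun.1 h 1
    simpa using this
  have hX' : ∀ n ω s u, s * (X n ω).1 + u * (X n ω).2 = (Real.sqrt n)⁻¹ *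
      (∑ k ∈ Finset.range n, Y s u k ω - n * ∫ ω, Y s u 0 ω ∂μ) := by
    intro n ω s u
    rw [Ymean, hX, hH]
    have hterm : ∀ i, (A i ω : ℂ) * (B i ω : ℂ) * Complex.exp (Complex.I * (Θ i ω : ℂ))
        = ((A i ω * B i ω * Real.cos (Θ i ω) : ℝ) : ℂ)
          + ((A i ω * B i ω * Real.sin (Θ i ω) : ℝ) : ℂ) * I := by
      intro i
      rw [mul_comm I, Complex.exp_mul_I]
      push_cast
      ring
    have hsum : (n : ℂ)⁻¹ * ∑ i ∈ Finset.range n,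
        (A i ω : ℂ) * (B i ω : ℂ) * Complex.exp (Complex.I * (Θ i ω : ℂ))
        = (((n : ℝ)⁻¹ * ∑ i ∈ Finset.range n, A i ω * B i ω * Real.cos (Θ i ω) : ℝ) : ℂ)
        + (((n : ℝ)⁻¹ * ∑ i ∈ Finset.range n, A i ω * B i ω * Real.sin (Θ i ω) : ℝ) : ℂ) * I := by
      simp_rw [hterm]
      rw [Finset.sum_add_distrib, ← Finset.sum_mul]
      push_cast
      ring
    simp only [hsum, add_re, add_im, re_ofReal_mul, im_ofReal_mul, ofReal_re, ofReal_im, I_re, I_im,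
      mul_zero, mul_one, add_zero, zero_add]
    have hY : ∑ k ∈ Finset.range n, Y s u k ω
        = s * ∑ i ∈ Finset.range n, A i ω * B i ω * Real.cos (Θ i ω)
        + u * ∑ i ∈ Finset.range n, A i ω * B i ω * Real.sin (Θ i ω) := by
      rw [Finset.mul_sum, Finset.mul_sum, ← Finset.sum_add_distrib]
      refine Finset.sum_congr rfl fun i _ => ?_
      simp only [Y]
      ring
    rw [hY]
    rcases Nat.eq_zero_or_pos n with rfl | hn
    · simp
    · have hn' : (0 : ℝ) < n := by exact_mod_cast hn
      have hs : Real.sqrt n ≠ 0 := (Real.sqrt_pos.2 hn').ne'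
      have hq : (n : ℝ) = Real.sqrt n ^ 2 := (Real.sq_sqrt hn'.le).symm
      generalize Real.sqrt n = q at *
      rw [hq]
      field_simp
      ring
  have mXn : ∀ n, Measurable (X n) := by
    intro n
    have h1 : ∀ s u, Measurable (fun ω => s * (X n ω).1 + u * (X n ω).2) := by
      intro s u
      simp_rw [hX']
      have := mY s u
      fun_prop
    have e1 := h1 1 0
    have e2 := h1 0 1
    simp only [one_mul, zero_mul, add_zero, zero_add] at e1 e2
    exact e1.prodMk e2
  have mL : Measurable (WithLp.toLp 2 : ℝ × ℝ → WithLp 2 (ℝ × ℝ)) := by fun_prop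
  have hGp : IsProbabilityMeasure G := by rw [hG]; infer_instance
  have hXp : ∀ n, IsProbabilityMeasure (μ.map (X n)) := fun n =>
    Measure.isProbabilityMeasure_map (mXn n).aemeasurable
  have hXp' : ∀ n, IsProbabilityMeasure ((μ.map (X n)).map (WithLp.toLp 2)) := fun n =>
    Measure.isProbabilityMeasure_map mL.aemeasurable
  have hGp' : IsProbabilityMeasure (G.map (WithLp.toLp 2)) :=
    Measure.isProbabilityMeasure_map mL.aemeasurable
  have conv : Tendsto (β := ProbabilityMeasure (WithLp 2 (ℝ × ℝ)))
      (fun n => ⟨(μ.map (X n)).map (WithLp.toLp 2), hXp' n⟩) atTop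
      (𝓝 ⟨G.map (WithLp.toLp 2), hGp'⟩) := by
    refine ProbabilityMeasure.tendsto_iff_tendsto_charFun.2 fun t => ?_
    have h := clt t.fst t.snd
    have e1 : ∀ n, charFun ((μ.map (X n)).map (WithLp.toLp 2)) t
        = charFun (μ.map (fun ω => (Real.sqrt n)⁻¹ *
      (∑ k ∈ Finset.range n, Y t.fst t.snd k ω - n * ∫ ω, Y t.fst t.snd 0 ω ∂μ))) 1 := by
      intro n
      simp_rw [← hX']
      have := mXn n
      rw [Measure.map_map mL (mXn n), charFun_apply, charFun_apply,
        integral_map (mL.comp (mXn n)).aemeasurable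
          (Continuous.aestronglyMeasurable (by fun_prop)),
        integral_map (Measurable.aemeasurable (by fun_prop))
          (Continuous.aestronglyMeasurable (by fun_prop))]
      congr 1 with ω
      simp [WithLp.prod_inner_apply]
    have e2 : charFun (G.map (WithLp.toLp 2)) t
        = charFun (gaussianReal 0 Var[Y t.fst t.snd 0; μ].toNNReal) 1 := by
      rw [hG, charFun_prod, charFun_gaussianReal, charFun_gaussianReal, charFun_gaussianReal,
        ← Complex.exp_add, Real.coe_toNNReal _ (variance_nonneg _ _), Yvar,
        Real.coe_toNNReal _ v1, Real.coe_toNNReal _ v2]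
      congr 1
      change _ = ((1 : ℝ) : ℂ) * ((0 : ℝ) : ℂ) * I -
        ((t.ofLp.1 ^ 2 * ((1 + φ₂ - 2 * φ₁ ^ 2 * a ^ 4) / 2)
          + t.ofLp.2 ^ 2 * ((1 - φ₂) / 2) : ℝ) : ℂ) * ((1 : ℝ) : ℂ) ^ 2 / 2
      push_cast
      ring
    simp only [ProbabilityMeasure.coe_mk]
    simp_rw [e1, e2]
    exact h
  intro f
  have := ProbabilityMeasure.tendsto_iff_forall_integral_tendsto.1 conv
    (f.compContinuous ⟨WithLp.ofLp, by fun_prop⟩)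
  simp only [ProbabilityMeasure.coe_mk] at this
  have e : ∀ ν : Measure (ℝ × ℝ), ∫ x, (f.compContinuous
      (⟨WithLp.ofLp, by fun_prop⟩ : C(WithLp 2 (ℝ × ℝ), ℝ × ℝ))) x ∂(ν.map (WithLp.toLp 2))
      = ∫ x, f x ∂ν := by
    intro ν
    rw [integral_map mL.aemeasurable
      (BoundedContinuousFunction.continuous _).aestronglyMeasurable]
    rfl
  simp_rw [e] at this
  exact this
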